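/- arXiv:0812.5002 — 2 statements merged into one kernel-verified Lean document; each statement's English description precedes it below -/
import Mathlib

section
/- Let L be the centerless twisted N=2 superconformal algebra, V = L ⊗ L the L-module under the adjoint diagonal action, and let d ∈ Der(L, V) be a super-derivation with homogeneous decomposition d = Σ_{i ∈ (1/2)ℤ} d_i, where each d_i is a homogeneous derivation of degree i and each d_i = (v_i)_inn is inner for some v_i ∈ V_i. Then only finitely many of the v_i are nonzero; in particular the sum d = Σ_i d_i is finite and d is inner. -/
namespace N2

/-- Basis indices of the centerless twisted N=2 superconformal algebra:
`L m` is the Virasoro generator `L_m` (`m ∈ ℤ`),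
`T k` is the Heisenberg generator `T_{k+1/2}` (`k ∈ ℤ`, index in `1/2 + ℤ`),
`G n` is the fermionic generator `G_{n/2}` (`n ∈ ℤ`, index in `(1/2)ℤ`). -/
inductive Idx : Type
  | L : ℤ → Idx
  | T : ℤ → Idx
  | G : ℤ → Idx
  deriving DecidableEq

noncomputable section

/-- The centerless twisted N=2 superconformal algebra `𝓛`, as the free
complex vector space on the basis `{L_m, T_r, G_p}`. -/
abbrev Lsa : Type := Idx →₀ ℂ

/-- `𝓛 ⊗ 𝓛`, realized as the free complex vector space on pairs of basis indices. -/
abbrev V : Type := (Idx × Idx) →₀ ℂ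

/-- `𝓛 ⊗ 𝓛 ⊗ 𝓛`. -/
abbrev W : Type := (Idx × Idx × Idx) →₀ ℂ

/-- the basis vector indexed by `i`. -/
def e (i : Idx) : Lsa := Finsupp.single i 1

/-- the ℤ₂-parity of the basis elements: `L_m, T_r` are even, `G_p` is odd. -/
def par : Idx → ZMod 2
  | .L _ => 0
  | .T _ => 0
  | .G _ => 1

/-- the sign `(-1)^p` for `p ∈ ℤ₂`. -/
def sgn (p : ZMod 2) : ℂ := if p = 0 then 1 else -1

/-- the `(1/2)ℤ`-degree of a basis element, as a rational number:
`L_m ↦ m`, `T_{k+1/2} ↦ k + 1/2`, `G_{n/2} ↦ n/2`. -/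
def qdeg : Idx → ℚ
  | .L m => (m : ℚ)
  | .T k => (k : ℚ) + 1/2
  | .G n => (n : ℚ) / 2

/-- The super-bracket of `𝓛` on basis elements:
`[L_m, L_n] = (m-n) L_{m+n}`, `[L_m, T_r] = -r T_{r+m}`, `[T_r, T_s] = 0`,
`[L_m, G_p] = (m/2 - p) G_{p+m}`, `[T_r, G_p] = G_{p+r}`,
`[G_p, G_q] = (-1)^{2p} 2 L_{p+q}` if `p+q ∈ ℤ` and
`[G_p, G_q] = (-1)^{2p+1} (p-q) T_{p+q}` if `p+q ∈ 1/2+ℤ`,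
together with the super skew-symmetric counterparts. -/
def bk : Idx → Idx → Lsa
  | .L m, .L n => ((m : ℂ) - n) • e (.L (m + n))
  | .L m, .T k => (-((k : ℂ) + 1/2)) • e (.T (k + m))
  | .L m, .G n => (((m : ℂ) - n) / 2) • e (.G (n + 2*m))
  | .T k, .L m => ((k : ℂ) + 1/2) • e (.T (k + m))
  | .T _, .T _ => 0
  | .T k, .G n => e (.G (n + 2*k + 1))
  | .G n, .L m => (-((m : ℂ) - n) / 2) • e (.G (n + 2*m))
  | .G n, .T k => - e (.G (n + 2*k + 1))
  | .G n, .G n' =>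
      if (n + n') % 2 = 0 then
        ((-1 : ℂ) ^ n * 2) • e (.L ((n + n') / 2))
      else
        ((-1 : ℂ) ^ (n + 1) * (((n : ℂ) - n') / 2)) • e (.T ((n + n' - 1) / 2))

/-- the bracket of `𝓛`, extended bilinearly to all of `𝓛`. -/
def br (x y : Lsa) : Lsa :=
  x.sum fun i a => y.sum fun j b => (a * b) • bk i j

/-- the adjoint diagonal action of `𝓛` on `𝓛 ⊗ 𝓛`:
`x ∗ (a ⊗ b) = [x,a] ⊗ b + (-1)^{[x][a]} a ⊗ [x,b]`. -/
def act2 (x : Lsa) (v : V) : V :=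
  x.sum fun i a => v.sum fun p c =>
    (a * c) •
      (((bk i p.1).sum fun k t => Finsupp.single (k, p.2) t)
        + sgn (par i * par p.1) • ((bk i p.2).sum fun k t => Finsupp.single (p.1, k) t))

/-- the adjoint diagonal action of `𝓛` on `𝓛 ⊗ 𝓛 ⊗ 𝓛`. -/
def act3 (x : Lsa) (w : W) : W :=
  x.sum fun i a => w.sum fun p c =>
    (a * c) •
      (((bk i p.1).sum fun k t => Finsupp.single (k, p.2.1, p.2.2) t)
        + sgn (par i * par p.1) •
            ((bk i p.2.1).sum fun k t => Finsupp.single (p.1, k, p.2.2) t)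
        + sgn (par i * (par p.1 + par p.2.1)) •
            ((bk i p.2.2).sum fun k t => Finsupp.single (p.1, p.2.1, k) t))

/-- the adjoint diagonal action of `𝓛` on the `n`-fold tensor power `𝓛^{⊗n}`,
realized as the free complex vector space on `n`-tuples of basis indices:
`x ∗ (a₁ ⊗ ⋯ ⊗ aₙ) = Σ_k (-1)^{[x]([a₁]+⋯+[a_{k-1}])} a₁ ⊗ ⋯ ⊗ [x,a_k] ⊗ ⋯ ⊗ aₙ`. -/
def actN (n : ℕ) (x : Lsa) (v : (Fin n → Idx) →₀ ℂ) : (Fin n → Idx) →₀ ℂ :=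
  x.sum fun i a => v.sum fun f c =>
    (a * c) •
      (Finset.univ.sum fun k : Fin n =>
        sgn (par i * ((Finset.univ.filter fun l => l < k).sum fun l => par (f l))) •
          ((bk i (f k)).sum fun j t => Finsupp.single (Function.update f k j) t))

/-- the super-twist map `τ : 𝓛 ⊗ 𝓛 → 𝓛 ⊗ 𝓛`, `τ(x ⊗ y) = (-1)^{[x][y]} y ⊗ x`. -/
def tau (v : V) : V :=
  v.sum fun p c => (sgn (par p.1 * par p.2) * c) • Finsupp.single (p.2, p.1) 1

/-- the image `Im(1⊗1 - τ) ⊂ 𝓛 ⊗ 𝓛`. -/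
def ImOneSubTau : Set V := Set.range fun v : V => v - tau v

/-- the super-cyclic map `ξ` on `𝓛 ⊗ 𝓛 ⊗ 𝓛`:
`ξ(x₁ ⊗ x₂ ⊗ x₃) = (-1)^{[x₁]([x₂]+[x₃])} x₂ ⊗ x₃ ⊗ x₁`. -/
def xi (w : W) : W :=
  w.sum fun p c =>
    (sgn (par p.1 * (par p.2.1 + par p.2.2)) * c) • Finsupp.single (p.2.1, p.2.2, p.1) 1

/-- `c(r) = [r¹², r¹³] + [r¹², r²³] + [r¹³, r²³] ∈ 𝓛 ⊗ 𝓛 ⊗ 𝓛` for `r ∈ 𝓛 ⊗ 𝓛`. -/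
def cYB (r : V) : W :=
  r.sum fun p a => r.sum fun q b =>
    (a * b) •
      (sgn (par q.1 * par p.2) •
          ((bk p.1 q.1).sum fun k t => Finsupp.single (k, p.2, q.2) t)
        + ((bk p.2 q.1).sum fun k t => Finsupp.single (p.1, k, q.2) t)
        + sgn (par q.1 * par p.2) •
            ((bk p.2 q.2).sum fun k t => Finsupp.single (p.1, q.1, k) t))

/-- `1 ⊗ D : 𝓛 ⊗ 𝓛 → 𝓛 ⊗ 𝓛 ⊗ 𝓛` for an even map `D : 𝓛 → 𝓛 ⊗ 𝓛`. -/
def oneTensorMap (D : Lsa → V) (v : V) : W :=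
  v.sum fun p c => c • ((D (e p.2)).sum fun q t => Finsupp.single (p.1, q.1, q.2) t)

/-- `r ∈ 𝓛 ⊗ 𝓛` is homogeneous of parity `ε ∈ ℤ₂`. -/
def IsParityV (ε : ZMod 2) (r : V) : Prop := ∀ p ∈ r.support, par p.1 + par p.2 = ε

/-- `r ∈ 𝓛 ⊗ 𝓛` is even (degree `0̄`). -/
def IsEvenV (r : V) : Prop := IsParityV 0 r

/-- `r` lies in the graded component `V_ι = Σ_{j+k=ι} 𝓛_j ⊗ 𝓛_k` of `V = 𝓛 ⊗ 𝓛`. -/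
def IsDegV (ι : ℚ) (r : V) : Prop := ∀ p ∈ r.support, qdeg p.1 + qdeg p.2 = ι

/-- the linear map `𝓛 → M` with the prescribed values on the basis. -/
def ofBasis {M : Type*} [AddCommMonoid M] [Module ℂ M] (g : Idx → M) : Lsa →ₗ[ℂ] M :=
  Finsupp.lsum ℂ fun i => LinearMap.toSpanSingleton ℂ M (g i)

/-- the inner super-derivation `a_inn` attached to `a ∈ 𝓛 ⊗ 𝓛` of parity `ε`:
`a_inn(x) = (-1)^{[a][x]} x ∗ a` for homogeneous `x`, extended linearly. -/
def innMap (ε : ZMod 2) (a : V) : Lsa →ₗ[ℂ] V :=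
  ofBasis fun i => sgn (ε * par i) • act2 (e i) a

/-- `d : 𝓛 → 𝓛 ⊗ 𝓛` is a super-derivation of parity `ε`:
`d(𝓛_ī) ⊆ V_{ī+ε}` and
`d([x,y]) = (-1)^{[d][x]} x ∗ d(y) - (-1)^{[y]([d]+[x])} y ∗ d(x)`
for homogeneous `x, y` (stated on basis elements and extended bilinearly). -/
def IsDerOfParity (ε : ZMod 2) (d : Lsa →ₗ[ℂ] V) : Prop :=
  (∀ i : Idx, IsParityV (par i + ε) (d (e i))) ∧
  (∀ i j : Idx,
    d (bk i j)
      = sgn (ε * par i) • act2 (e i) (d (e j))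
        - sgn (par j * (ε + par i)) • act2 (e j) (d (e i)))

/-- `d` is homogeneous of degree `ι ∈ (1/2)ℤ` with respect to the `(1/2)ℤ`-grading:
`d(𝓛_j) ⊆ V_{ι+j}`. -/
def IsDegHomogDer (ι : ℚ) (d : Lsa →ₗ[ℂ] V) : Prop :=
  ∀ i : Idx, IsDegV (ι + qdeg i) (d (e i))

/-- `D : 𝓛 → 𝓛 ⊗ 𝓛` defines a Lie super-bialgebra structure on `𝓛`: it is linear,
`D(𝓛_ī) ⊆ Σ_j 𝓛_j̄ ⊗ 𝓛_{ī-j̄}`, `Im D ⊆ Im(1⊗1-τ)`,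
`(1⊗1⊗1 + ξ + ξ²)(1 ⊗ D)D = 0`, and
`D([x,y]) = x ∗ D(y) - (-1)^{[x][y]} y ∗ D(x)`. -/
structure IsLieSuperBialgebraDelta (D : Lsa → V) : Prop where
  linear : IsLinearMap ℂ D
  parity : ∀ i : Idx, IsParityV (par i) (D (e i))
  skewIm : ∀ x : Lsa, D x ∈ ImOneSubTau
  coJacobi : ∀ x : Lsa,
    oneTensorMap D (D x) + xi (oneTensorMap D (D x)) + xi (xi (oneTensorMap D (D x))) = 0
  cocycle : ∀ i j : Idx,
    D (bk i j) = act2 (e i) (D (e j)) - sgn (par i * par j) • act2 (e j) (D (e i))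

/-- the value of `act2 (e i)` on the basis vector of `V` indexed by `p`. -/
def actB (i : Idx) (p : Idx × Idx) : V :=
  ((bk i p.1).sum fun k t => Finsupp.single (k, p.2) t)
    + sgn (par i * par p.1) • ((bk i p.2).sum fun k t => Finsupp.single (p.1, k) t)

theorem act2_e (i : Idx) (v : V) : act2 (e i) v = v.sum fun p c => c • actB i p := by
  unfold act2 e actB
  rw [Finsupp.sum_single_index]
  · simp only [one_mul]
  · simp

theorem act2_e_add (i : Idx) (v w : V) : act2 (e i) (v + w) = act2 (e i) v + act2 (e i) w := by
  simp only [act2_e]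
  exact Finsupp.sum_add_index' (fun _ => zero_smul _ _) (fun _ _ _ => add_smul _ _ _)

theorem act2_e_zero (i : Idx) : act2 (e i) 0 = 0 := by
  rw [act2_e, Finsupp.sum_zero_index]

theorem bk_L0 (i : Idx) : bk (.L 0) i = (-(qdeg i : ℂ)) • e i := by
  cases i <;> simp [bk, qdeg, neg_div]

theorem actB_L0 (p : Idx × Idx) :
    actB (.L 0) p = (-((qdeg p.1 + qdeg p.2 : ℚ) : ℂ)) • Finsupp.single p (1 : ℂ) := by
  obtain ⟨a, b⟩ := p
  have hs : sgn (par (.L 0) * par a) = 1 := by simp [par, sgn]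
  simp only [actB, hs, one_smul, bk_L0, e, Finsupp.smul_single, smul_eq_mul, mul_one]
  rw [Finsupp.sum_single_index (by simp), Finsupp.sum_single_index (by simp),
    ← Finsupp.single_add]
  congr 1
  push_cast
  ring

theorem act2_L0 (q : ℚ) (v : V) (hv : IsDegV q v) :
    act2 (e (.L 0)) v = (-(q : ℂ)) • v := by
  rw [act2_e]
  have h : (v.sum fun p c => c • actB (.L 0) p)
      = v.sum fun p c => (-(q : ℂ)) • Finsupp.single p c := by
    refine Finsupp.sum_congr fun p hp => ?_
    rw [actB_L0, hv p hp]
    simp [mul_comm]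
  rw [h, ← Finsupp.smul_sum, Finsupp.sum_single]

theorem innMap_e (ε : ZMod 2) (a : V) (i : Idx) :
    innMap ε a (e i) = sgn (ε * par i) • act2 (e i) a := by
  simp [innMap, ofBasis, e]

theorem innMap_add (ε : ZMod 2) (a b : V) : innMap ε (a + b) = innMap ε a + innMap ε b := by
  refine Finsupp.lhom_ext' fun i => LinearMap.ext_ring ?_
  change innMap ε (a + b) (e i) = innMap ε a (e i) + innMap ε b (e i)
  simp only [innMap_e, act2_e_add, smul_add]

theorem innMap_zero (ε : ZMod 2) : innMap ε 0 = 0 := by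
  refine Finsupp.lhom_ext' fun i => LinearMap.ext_ring ?_
  change innMap ε 0 (e i) = 0
  simp only [innMap_e, act2_e_zero, smul_zero]

theorem innMap_sum (ε : ZMod 2) (s : Finset ℤ) (v : ℤ → V) :
    innMap ε (∑ k ∈ s, v k) = ∑ k ∈ s, innMap ε (v k) := by
  induction s using Finset.induction_on with
  | empty => simp [innMap_zero]
  | insert k s hk ih => rw [Finset.sum_insert hk, Finset.sum_insert hk, innMap_add, ih]

/-- If a super-derivation `d : 𝓛 → V = 𝓛 ⊗ 𝓛` decomposes as a summable sum
`d = Σ_{ι ∈ (1/2)ℤ} (v_ι)_inn` with `v_ι ∈ V_ι` (half integers `ι`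
parametrized as `k/2`, `k ∈ ℤ`), then only finitely many `v_ι` are nonzero;
in particular the sum is finite and `d` is inner. -/
theorem summable_inner_decomposition_is_finite (ε : ZMod 2) (d : Lsa →ₗ[ℂ] V)
    (hd : IsDerOfParity ε d) (v : ℤ → V)
    (hv : ∀ k : ℤ, IsParityV ε (v k) ∧ IsDegV ((k : ℚ) / 2) (v k))
    (hsum : ∀ u : Lsa,
      {k : ℤ | innMap ε (v k) u ≠ 0}.Finite ∧ d u = ∑ᶠ k : ℤ, innMap ε (v k) u) :
    {k : ℤ | v k ≠ 0}.Finite ∧ ∃ a : V, d = innMap ε a := by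
  have hfin : {k : ℤ | v k ≠ 0}.Finite := by
    refine (((hsum (e (.L 0))).1).union (Set.finite_singleton (0 : ℤ))).subset ?_
    intro k hk
    by_cases h0 : k = 0
    · right; exact h0
    · left
      change innMap ε (v k) (e (.L 0)) ≠ 0
      have hs : sgn (ε * par (.L 0)) = 1 := by simp [par, sgn]
      rw [innMap_e, hs, one_smul, act2_L0 _ _ (hv k).2]
      refine smul_ne_zero ?_ hk
      simp [h0]
  refine ⟨hfin, ∑ k ∈ hfin.toFinset, v k, ?_⟩
  refine LinearMap.ext fun u => ?_
  rw [(hsum u).2, innMap_sum, LinearMap.sum_apply]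
  refine finsum_eq_sum_of_support_subset _ fun k hk => ?_
  simp only [Set.Finite.coe_toFinset, Set.mem_setOf_eq]
  intro h
  apply hk
  simp [h, innMap_zero]

end
end N2
end

section
/- Let L be the centerless twisted N=2 superconformal algebra, V = L ⊗ L the L-module under the adjoint diagonal action, and let d₀ be an even homogeneous super-derivation from L to V of degree 0 with respect to the (1/2)ℤ-grading such that d₀(L_i) = 0 for all i ∈ ℤ. Then d₀(G_r) = 0 for all r ∈ 1/2 + ℤ. -/
namespace N2

noncomputable section

/-- The shift of basis indices induced by `L_m`. -/
def sh (m : ℤ) : Idx → Idx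
  | .L n => .L (n + m)
  | .T k => .T (k + m)
  | .G n => .G (n + 2 * m)

/-- The structure coefficient of `[L_m, -]`. -/
def lam (m : ℤ) : Idx → ℂ
  | .L n => (m : ℂ) - n
  | .T k => -((k : ℂ) + 1/2)
  | .G n => ((m : ℂ) - n) / 2

lemma bk_L (m : ℤ) (i : Idx) : bk (.L m) i = lam m i • e (sh m i) := by
  cases i <;> simp [bk, lam, sh, add_comm]

lemma sh_neg_sh (m : ℤ) (i : Idx) : sh (-m) (sh m i) = i := by
  cases i <;> simp [sh]

lemma sh_eq_iff (m : ℤ) (i j : Idx) : sh m i = j ↔ i = sh (-m) j := by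
  constructor
  · rintro rfl
    rw [sh_neg_sh]
  · rintro rfl
    simpa using sh_neg_sh (-m) j

lemma act2_L (m : ℤ) (v : V) : act2 (e (.L m)) v = v.sum fun p c =>
    c • (Finsupp.single (sh m p.1, p.2) (lam m p.1)
      + Finsupp.single (p.1, sh m p.2) (lam m p.2)) := by
  unfold act2
  rw [e, Finsupp.sum_single_index (by simp)]
  refine Finsupp.sum_congr fun p _ => ?_
  simp [bk_L, e, par, sgn]

lemma act2_L_apply (m : ℤ) (v : V) (x y : Idx) :
    act2 (e (.L m)) v (x, y) = lam m (sh (-m) x) * v (sh (-m) x, y)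
      + lam m (sh (-m) y) * v (x, sh (-m) y) := by
  rw [act2_L]
  induction v using Finsupp.induction_linear with
  | zero => simp
  | add f g hf hg =>
    rw [Finsupp.sum_add_index' (by simp) (by intros; rw [add_smul])]
    rw [Finsupp.add_apply, hf, hg]
    simp only [Finsupp.add_apply]
    ring
  | single p c =>
    obtain ⟨a, b⟩ := p
    rw [Finsupp.sum_single_index (by simp)]
    simp only [Finsupp.smul_apply, Finsupp.add_apply, Finsupp.single_apply, Prod.mk.injEq,
      sh_eq_iff, smul_eq_mul]
    rw [mul_add]
    congr 1
    · split_ifs with h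
      · rw [h.1, mul_comm]
      · simp
    · split_ifs with h
      · rw [h.2, mul_comm]
      · simp

/-- Far away shifts leave a finite support. -/
lemma eventually_zero (v : Idx → Idx → ℂ) (S : Finset Idx) (hS : ∀ x y, y ∉ S → v x y = 0)
    (n : ℤ) (X : ℤ → Idx) : ∃ M : ℤ, ∀ m ≥ M, v (X m) (sh (-m) (.G n)) = 0 := by
  let w : Idx → ℤ := fun i => match i with
    | .G k => n - k
    | _ => 0
  obtain ⟨M, hM⟩ := (S.image w).bddAbove
  refine ⟨max 1 (M + 1), fun m hm => hS _ _ fun hmem => ?_⟩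
  have := hM (Finset.mem_coe.2 (Finset.mem_image_of_mem w hmem))
  simp only [sh, w] at this
  have h1 : 1 ≤ m := le_trans (le_max_left _ _) hm
  have h2 : M + 1 ≤ m := le_trans (le_max_right _ _) hm
  linarith

lemma kill (F : ℤ → Idx → Idx → ℂ)
    (hF : ∀ (k m : ℤ) (x y : Idx), (((m : ℂ) - (2 * k + 1)) / 2) * F (k + m) x y
      = lam m (sh (-m) x) * F k (sh (-m) x) y + lam m (sh (-m) y) * F k x (sh (-m) y))
    (hS : ∀ k, ∃ S : Finset Idx, ∀ x y, y ∉ S → F k x y = 0) (q : ℤ) :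
    (∀ k a, F k (.L a) (.G q) = 0) ∧ (∀ k a, F k (.T a) (.G q) = 0) := by
  have key : ∀ (x : Idx) (k : ℤ), ∃ M : ℤ, ∀ K ≥ M,
      ((K : ℂ) - 3 * k - 1) * F K (sh K x) (.G q)
        = 2 * lam (K - k) (sh k x) * F k (sh k x) (.G q) := by
    intro x k
    obtain ⟨S, hS⟩ := hS k
    obtain ⟨M, hM⟩ := eventually_zero (F k) S hS q (fun m => sh (k + m) x)
    refine ⟨M + k, fun K hK => ?_⟩
    have h := hF k (K - k) (sh K x) (.G q)
    have h0 := hM (K - k) (by linarith)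
    have e1 : k + (K - k) = K := by ring
    have e2 : sh (-(K - k)) (sh K x) = sh k x := by
      cases x <;> simp only [sh] <;> congr 1 <;> ring
    simp only [e1] at h0 h
    rw [h0, e2] at h
    push_cast at h
    linear_combination 2 * h
  have shsh : ∀ k x, sh k (sh (-k) x) = x := fun k x => by simpa using sh_neg_sh (-k) x
  constructor
  · intro k a
    obtain ⟨M, hM⟩ := key (sh (-k) (.L a)) k
    obtain ⟨M', hM'⟩ := key (sh (-k) (.L a)) (k + 1)
    rw [shsh] at hM
    set g' := F (k + 1) (sh (k + 1) (sh (-k) (.L a))) (.G q)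
    set g := F k (.L a) (.G q)
    have cr : ∀ K ≥ max M M', ((K : ℂ) - 3 * k - 4) * ((K : ℂ) - k - a) * g
        = ((K : ℂ) - 3 * k - 1) * ((K : ℂ) - k - a - 2) * g' := by
      intro K hK
      have h := hM K (le_trans (le_max_left _ _) hK)
      have h' := hM' K (le_trans (le_max_right _ _) hK)
      simp only [sh, lam] at h h'
      push_cast at h h'
      linear_combination ((K : ℂ) - 3 * k - 1) / 2 * h' - ((K : ℂ) - 3 * k - 4) / 2 * h
    have c0 := cr (max M M') le_rfl
    have c1 := cr (max M M' + 1) (by linarith)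
    have c2 := cr (max M M' + 2) (by linarith)
    generalize max M M' = N at c0 c1 c2
    push_cast at c0 c1 c2
    have hgg : g' = g := by linear_combination (-1/2) * (c2 - 2 * c1 + c0)
    rw [hgg] at c0 c1
    linear_combination -(c1 - c0)
  · intro k a
    obtain ⟨M, hM⟩ := key (sh (-k) (.T a)) k
    obtain ⟨M', hM'⟩ := key (sh (-k) (.T a)) (k + 1)
    rw [shsh] at hM
    set g' := F (k + 1) (sh (k + 1) (sh (-k) (.T a))) (.G q)
    set g := F k (.T a) (.G q)
    have cr : ∀ K ≥ max M M', ((K : ℂ) - 3 * k - 4) * ((a + 1/2) * g)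
        = ((K : ℂ) - 3 * k - 1) * ((a + 1 + 1/2) * g') := by
      intro K hK
      have h := hM K (le_trans (le_max_left _ _) hK)
      have h' := hM' K (le_trans (le_max_right _ _) hK)
      simp only [sh, lam] at h h'
      push_cast at h h'
      linear_combination ((K : ℂ) - 3 * k - 4) / 2 * h - ((K : ℂ) - 3 * k - 1) / 2 * h'
    have c0 := cr (max M M') le_rfl
    have c1 := cr (max M M' + 1) (by linarith)
    generalize max M M' = N at c0 c1
    push_cast at c0 c1
    have hgg : ((a : ℂ) + 1 + 1/2) * g' = (a + 1/2) * g := by linear_combination -(c1 - c0)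
    rw [hgg] at c0
    have hz : ((2 * a + 1 : ℤ) : ℂ) * g = 0 := by
      push_cast
      linear_combination (-2/3) * c0
    rcases mul_eq_zero.1 hz with h | h
    · have : 2 * a + 1 = 0 := by exact_mod_cast h
      omega
    · exact h

/-- If an even homogeneous super-derivation `d₀ : 𝓛 → V = 𝓛 ⊗ 𝓛` of degree `0`
kills all `L_i` (`i ∈ ℤ`), then it kills all `G_r` with `r ∈ 1/2 + ℤ`
(half-integer `r = k + 1/2` encoded by the odd integer `2k + 1`). -/
theorem even_deg_zero_der_kills_half_integer_G (d : Lsa →ₗ[ℂ] V)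
    (hd : IsDerOfParity 0 d) (hhom : IsDegHomogDer 0 d)
    (hL : ∀ m : ℤ, d (e (Idx.L m)) = 0) :
    ∀ k : ℤ, d (e (Idx.G (2 * k + 1))) = 0 := by
  have rel : ∀ (k m : ℤ) (x y : Idx),
      (((m : ℂ) - (2 * k + 1)) / 2) * d (e (.G (2 * (k + m) + 1))) (x, y)
      = lam m (sh (-m) x) * d (e (.G (2 * k + 1))) (sh (-m) x, y)
        + lam m (sh (-m) y) * d (e (.G (2 * k + 1))) (x, sh (-m) y) := by
    intro k m x y
    have h := hd.2 (.L m) (.G (2 * k + 1))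
    have hz : act2 (e (.G (2 * k + 1))) (0 : V) = 0 := by simp [act2]
    rw [hL, hz, bk_L, map_smul] at h
    have h2 := DFunLike.congr_fun h (x, y)
    simp only [par, sgn, mul_zero, if_true, one_smul, smul_zero, sub_zero, act2_L_apply,
      Finsupp.smul_apply, smul_eq_mul] at h2
    rw [← h2]
    simp only [sh, lam]
    rw [show 2 * (k + m) + 1 = 2 * k + 1 + 2 * m by ring]
    push_cast
    ring
  have k1 := kill (fun k x y => d (e (.G (2 * k + 1))) (x, y)) rel (fun k =>
    ⟨(d (e (.G (2 * k + 1)))).support.image Prod.snd, fun x y hy => by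
      by_contra hne
      exact hy (Finset.mem_image.2 ⟨(x, y), Finsupp.mem_support_iff.2 hne, rfl⟩)⟩)
  have k2 := kill (fun k x y => d (e (.G (2 * k + 1))) (y, x))
    (fun k m x y => by rw [rel, add_comm]) (fun k =>
    ⟨(d (e (.G (2 * k + 1)))).support.image Prod.fst, fun x y hy => by
      by_contra hne
      exact hy (Finset.mem_image.2 ⟨(y, x), Finsupp.mem_support_iff.2 hne, rfl⟩)⟩)
  intro k
  ext ⟨x, y⟩
  by_contra hne
  have hp := hd.1 (.G (2 * k + 1)) (x, y) (Finsupp.mem_support_iff.2 hne)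
  rcases x with a | a | a <;> rcases y with b | b | b
  · simp [par] at hp
  · simp [par] at hp
  · exact hne ((k1 b).1 k a)
  · simp [par] at hp
  · simp [par] at hp
  · exact hne ((k1 b).2 k a)
  · exact hne ((k2 a).1 k b)
  · exact hne ((k2 a).2 k b)
  · exact absurd hp (by simp only [par]; decide)

end
end N2
end
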